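/- arXiv:math/0506432 — 2 statements merged into one kernel-verified Lean document; each statement's English description precedes it below -/
import Mathlib

section
/- Let a₁,...,aₙ be positive integers and set λ = [a₁,...,aₙ]⁺, and suppose λ > 1. Then: if a₁ = 1 (so n ≥ 2), λ/(λ−1) = [1+a₂, a₃, a₄,...,aₙ]⁺; and if a₁ ≥ 2, λ/(λ−1) = [1, a₁−1, a₂, a₃,...,aₙ]⁺ (in each case the stated continued fraction is well defined). -/
/-! With the convention `1 / 0 = 0`, the empty list having value `0` makes the recursion
`[x, t]⁺ = x + 1/[t]⁺` hold for every tail `t` (`ECF_cons`). Hence both identities reduce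
to one-step algebra in the unknown tail `r = 1/[t]⁺ ≥ 0`: from `λ = 1 + 1/(b + r)` one gets
`λ/(λ-1) = 1 + b + r`, and from `λ = a + r` one gets `λ/(λ-1) = 1 + 1/((a - 1) + r)`.
Well-definedness holds because all entries are positive (`ECF_drop_pos`). -/

/-- The Euclidean continued fraction `[x₁,...,xₙ]⁺ = x₁ + 1/(x₂ + 1/(⋯ + 1/xₙ))`
(value `0` for the empty list, by convention). -/
noncomputable def ECF : List ℝ → ℝ
  | [] => 0
  | [x] => x
  | x :: y :: t => x + 1 / ECF (y :: t)

/-- The recursion holds even for `t = []`, since `ECF [] = 0` and `1 / 0 = 0`. -/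
theorem ECF_cons (x : ℝ) (t : List ℝ) : ECF (x :: t) = x + 1 / ECF t := by
  cases t <;> simp [ECF]

theorem ECF_nonneg (l : List ℕ) : 0 ≤ ECF (l.map (Nat.cast : ℕ → ℝ)) := by
  induction l with
  | nil => simp [ECF]
  | cons x t ih =>
    rw [List.map_cons, ECF_cons]
    positivity

theorem ECF_drop_pos (l : List ℕ) (hl : ∀ x ∈ l, 0 < x) :
    ∀ k < (l.map (Nat.cast : ℕ → ℝ)).length, 0 < ECF ((l.map (Nat.cast : ℕ → ℝ)).drop k) := by
  intro k hk
  rw [List.length_map] at hk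
  have hx : (0 : ℝ) < l[k] := by exact_mod_cast hl _ (List.getElem_mem hk)
  have hr := ECF_nonneg (l.drop (k + 1))
  rw [← List.map_drop, List.drop_eq_getElem_cons hk, List.map_cons, ECF_cons]
  positivity

/-- If `λ = [a₁,...,aₙ]⁺ > 1` with `a₁,...,aₙ` positive integers (the list being
`a :: t`), then: if `a₁ = 1` (so `n ≥ 2`, i.e. `t = a₂ :: t'`), one has
`λ/(λ−1) = [1+a₂, a₃, ..., aₙ]⁺`; and if `a₁ ≥ 2`, one has
`λ/(λ−1) = [1, a₁−1, a₂, ..., aₙ]⁺`; in each case the stated continued fraction is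
well defined (all its tails are positive). -/
theorem stmt7 (a : ℕ) (t : List ℕ) (ha : 0 < a) (ht : ∀ x ∈ t, 0 < x)
    (lam : ℝ) (hlam : lam = ECF ((a :: t).map fun m => (m : ℝ)))
    (h1 : 1 < lam) :
    (a = 1 → ∃ b t', t = b :: t' ∧
      (∀ k < (((1 + b) :: t').map fun m => (m : ℝ)).length,
        0 < ECF ((((1 + b) :: t').map fun m => (m : ℝ)).drop k)) ∧
      lam / (lam - 1) = ECF (((1 + b) :: t').map fun m => (m : ℝ))) ∧
    (2 ≤ a →
      (∀ k < ((1 :: (a - 1) :: t).map fun m => (m : ℝ)).length,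
        0 < ECF (((1 :: (a - 1) :: t).map fun m => (m : ℝ)).drop k)) ∧
      lam / (lam - 1) = ECF ((1 :: (a - 1) :: t).map fun m => (m : ℝ))) := by
  -- The casts in the statement elaborate to a monadic coercion `List ℕ → List ℝ` followed by
  -- the identity map; this is entrywise `Nat.cast`.
  have hm : ∀ l : List ℕ, List.map (fun m : ℝ => m) (do let a ← l; pure (a : ℝ))
      = l.map (Nat.cast : ℕ → ℝ) := by
    intro l
    rw [List.map_id']
    exact List.flatMap_pure_eq_map _ _
  simp only [hm] at hlam ⊢
  rw [List.map_cons, ECF_cons] at hlam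
  refine ⟨?_, ?_⟩
  · rintro rfl
    cases t with
    | nil =>
      simp [ECF] at hlam
      linarith
    | cons b t' =>
      have hb : 0 < b := ht b (by simp)
      refine ⟨b, t', rfl, ECF_drop_pos _ ?_, ?_⟩
      · intro x hx
        rcases List.mem_cons.1 hx with rfl | hx
        · omega
        · exact ht x (by simp [hx])
      · have hr : 0 ≤ 1 / ECF (t'.map (Nat.cast : ℕ → ℝ)) :=
          one_div_nonneg.2 (ECF_nonneg t')
        rw [List.map_cons, ECF_cons] at hlam ⊢
        generalize 1 / ECF (t'.map (Nat.cast : ℕ → ℝ)) = r at *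
        have hb' : (0 : ℝ) < b := by exact_mod_cast hb
        have hs : (b : ℝ) + r ≠ 0 := by positivity
        subst hlam
        push_cast
        rw [add_sub_cancel_left]
        field_simp
        ring
  · intro h2
    refine ⟨ECF_drop_pos _ ?_, ?_⟩
    · intro x hx
      rcases List.mem_cons.1 hx with rfl | hx
      · omega
      rcases List.mem_cons.1 hx with rfl | hx
      · omega
      · exact ht x hx
    · rw [List.map_cons, List.map_cons, ECF_cons, ECF_cons, Nat.cast_sub (by omega)]
      have hs : lam - 1 ≠ 0 := by linarith
      have he : ((a : ℝ) - (1 : ℕ)) + 1 / ECF (t.map (Nat.cast : ℕ → ℝ)) = lam - 1 := by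
        rw [hlam]
        push_cast
        ring
      rw [he]
      field_simp
      push_cast
      ring
end

section
/- Let s ≥ 1 and let m₁,...,m_{s+1} and n₁,...,n_s be nonnegative integers, and let λ = [(2)^{m₁}, n₁+3, (2)^{m₂}, n₂+3, ..., n_s+3, (2)^{m_{s+1}}]⁻ be the value of the Hirzebruch–Jung continued fraction with these entries (all entries are ≥ 2, so it is well defined and λ > 1). Then λ/(λ−1) = [m₁+2, (2)^{n₁}, m₂+3, (2)^{n₂}, m₃+3, ..., (2)^{n_s}, m_{s+1}+2]⁻. -/
/-!
The argument tracks `v(l) = 1 - 1/[l]⁻`, so that `λ/(λ-1) = 1/v`, working from the right end of the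
list. Since `1/0 = 0` in Lean and `HJCF [] = 0`, the recursion `[x, l]⁻ = x - 1/[l]⁻` holds even for
empty `l`, and `v([]) = 1`.

Prepending an entry `2` replaces `1/v` by `1/v + 1` (`HJCF_replicate`), while prepending `n + 3`
replaces `1/v` by `1 + 1/(n + 1 + v)`. Hence prepending the block `(2)^m, n+3` gives
`1/v' = m + 1 + 1/(n + 1 + v)`. On the dual side, `(2)^n` is prepended to a list of value `1/v + 1`
(the next dual list, its head increased by one); by the same rule for twos the result has
reciprocal `1 - 1/(n + 1 + v)`, so putting `m + 2` in front gives the same value. The duality is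
then an induction on the number of blocks (`HJCF_dual`), which can start at zero blocks, where the
dual of `(2)^m` is the one-entry list `m + 1`.
-/

/-- The Hirzebruch–Jung continued fraction `[x₁,...,xₙ]⁻ = x₁ − 1/(x₂ − 1/(⋯ − 1/xₙ))`
(value `0` for the empty list, by convention). -/
noncomputable def HJCF : List ℝ → ℝ
  | [] => 0
  | [x] => x
  | x :: y :: t => x - 1 / HJCF (y :: t)

theorem HJCF_cons (x : ℝ) (l : List ℝ) : HJCF (x :: l) = x - (HJCF l)⁻¹ := by
  cases l <;> simp [HJCF]

theorem one_lt_HJCF (l : List ℝ) (hl : l ≠ []) (h : ∀ x ∈ l, 2 ≤ x) : 1 < HJCF l := by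
  induction l with
  | nil => exact absurd rfl hl
  | cons x t ih =>
    rw [HJCF_cons]
    have hx := h x (by simp)
    rcases eq_or_ne t [] with rfl | ht
    · simp only [HJCF, inv_zero]; linarith
    · have := inv_lt_one_of_one_lt₀ (ih ht fun y hy => h y (by simp [hy]))
      linarith

/-- The reciprocal of a continued fraction with entries at least `2`, the empty one included,
lies below `1`. -/
theorem inv_HJCF_lt_one (l : List ℝ) (h : ∀ x ∈ l, 2 ≤ x) : (HJCF l)⁻¹ < 1 := by
  rcases eq_or_ne l [] with rfl | hl
  · simp [HJCF]
  · exact inv_lt_one_of_one_lt₀ (one_lt_HJCF l hl h)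

/-- Prepending `k` entries equal to `2` adds `k` to `1 / (1 - 1/[l]⁻)`. -/
theorem HJCF_replicate (k : ℕ) (l : List ℝ) (h : (HJCF l)⁻¹ < 1) :
    (HJCF (List.replicate k 2 ++ l))⁻¹ < 1 ∧
    (1 - (HJCF (List.replicate k 2 ++ l))⁻¹)⁻¹ = (1 - (HJCF l)⁻¹)⁻¹ + k := by
  induction k with
  | zero => simpa using h
  | succ k ih =>
    obtain ⟨h1, h2⟩ := ih
    rw [List.replicate_succ, List.cons_append, HJCF_cons]
    set u := (HJCF (List.replicate k 2 ++ l))⁻¹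
    refine ⟨inv_lt_one_of_one_lt₀ (by linarith), ?_⟩
    have e : (1 - (2 - u)⁻¹)⁻¹ = (1 - u)⁻¹ + 1 := by
      have a : 1 - u ≠ 0 := by linarith
      have b : 2 - u ≠ 0 := by linarith
      have c : 1 - (2 - u)⁻¹ = (1 - u) / (2 - u) := by field_simp; ring
      rw [c]; field_simp; ring
    rw [e, h2]; push_cast; ring

/-- The entries `(2)^{m 0}, n 0 + 3, ..., n (s-1) + 3, (2)^{m s}`. -/
noncomputable def blocks (s : ℕ) (m n : ℕ → ℕ) : List ℝ :=
  ((List.range s).flatMap fun i =>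
    List.replicate (m i) (2 : ℝ) ++ [(n i : ℝ) + 3]) ++ List.replicate (m s) (2 : ℝ)

/-- The entries of the dual list that follow its first one. -/
noncomputable def dualTail (s : ℕ) (m n : ℕ → ℕ) : List ℝ :=
  (List.range s).flatMap fun i =>
    List.replicate (n i) (2 : ℝ) ++ [(m (i + 1) : ℝ) + (if i + 1 = s then 2 else 3)]

theorem blocks_succ (s : ℕ) (m n : ℕ → ℕ) : blocks (s + 1) m n =
    List.replicate (m 0) 2 ++
      ((n 0 : ℝ) + 3) :: blocks s (fun i => m (i + 1)) (fun i => n (i + 1)) := by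
  simp [blocks, List.range_succ_eq_map, List.flatMap_map]

theorem dualTail_succ (s : ℕ) (m n : ℕ → ℕ) : dualTail (s + 1) m n =
    List.replicate (n 0) 2 ++
      ((m 1 : ℝ) + (if s = 0 then 2 else 3)) ::
        dualTail s (fun i => m (i + 1)) (fun i => n (i + 1)) := by
  simp [dualTail, List.range_succ_eq_map, List.flatMap_map, eq_comm]

theorem two_le_of_mem_blocks (s : ℕ) (m n : ℕ → ℕ) : ∀ x ∈ blocks s m n, 2 ≤ x := by
  intro x hx
  simp only [blocks, List.mem_append, List.mem_flatMap, List.mem_replicate,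
    List.mem_singleton] at hx
  rcases hx with ⟨i, -, ⟨-, rfl⟩ | rfl⟩ | ⟨-, rfl⟩
  · exact le_rfl
  · have : (0 : ℝ) ≤ n i := Nat.cast_nonneg _
    linarith
  · exact le_rfl

/-- The duality, extended to `s = 0`, where the single entry of the dual list is `m 0 + 1`. -/
theorem HJCF_dual (s : ℕ) (m n : ℕ → ℕ) : (1 - (HJCF (blocks s m n))⁻¹)⁻¹ =
    HJCF (((m 0 : ℝ) + (if s = 0 then 1 else 2)) :: dualTail s m n) := by
  induction s generalizing m n with
  | zero =>
    have := (HJCF_replicate (m 0) [] (by simp [HJCF])).2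
    simp only [List.append_nil] at this
    simp [blocks, dualTail, this, HJCF, add_comm]
  | succ s ih =>
    have ih := ih (fun i => m (i + 1)) (fun i => n (i + 1))
    have hmem := two_le_of_mem_blocks s (fun i => m (i + 1)) (fun i => n (i + 1))
    have hlt := inv_HJCF_lt_one _ hmem
    rw [blocks_succ, dualTail_succ]
    generalize blocks s (fun i => m (i + 1)) (fun i => n (i + 1)) = l at *
    generalize dualTail s (fun i => m (i + 1)) (fun i => n (i + 1)) = t at *
    obtain ⟨v, hv⟩ : ∃ v, v = 1 - (HJCF l)⁻¹ := ⟨_, rfl⟩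
    have hv0 : 0 < v := by linarith
    have hN : (0 : ℝ) ≤ n 0 := Nat.cast_nonneg _
    have hl : (HJCF (((n 0 : ℝ) + 3) :: l))⁻¹ = (n 0 + 2 + v)⁻¹ := by
      rw [HJCF_cons, hv]; ring_nf
    -- the remaining dual list is the one for the shifted sequences, its head increased by one
    have ht : HJCF (((m 1 : ℝ) + (if s = 0 then 2 else 3)) :: t) = v⁻¹ + 1 := by
      rw [hv, ih, HJCF_cons, HJCF_cons]
      split_ifs <;> ring
    have hl1 : (HJCF (((n 0 : ℝ) + 3) :: l))⁻¹ < 1 := by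
      rw [hl]; exact inv_lt_one_of_one_lt₀ (by linarith)
    have ht1 : (HJCF (((m 1 : ℝ) + (if s = 0 then 2 else 3)) :: t))⁻¹ < 1 := by
      rw [ht]; exact inv_lt_one_of_one_lt₀ (by have := inv_pos.2 hv0; linarith)
    have hL := (HJCF_replicate (m 0) _ hl1).2
    have hR := (HJCF_replicate (n 0) _ ht1).2
    rw [hl] at hL
    rw [ht] at hR
    rw [hL, HJCF_cons, if_neg (Nat.succ_ne_zero s)]
    have e1 : (1 - (v⁻¹ + 1)⁻¹)⁻¹ = 1 + v := by
      have c : 1 - (v⁻¹ + 1)⁻¹ = (1 + v)⁻¹ := by field_simp; ring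
      rw [c, inv_inv]
    have e2 : (1 - ((n 0 : ℝ) + 2 + v)⁻¹)⁻¹ = 1 + (1 + v + n 0)⁻¹ := by
      have a : (n 0 : ℝ) + 2 + v ≠ 0 := by positivity
      have b : 1 + v + (n 0 : ℝ) ≠ 0 := by positivity
      have c : 1 - ((n 0 : ℝ) + 2 + v)⁻¹ = (1 + v + n 0) / (n 0 + 2 + v) := by
        field_simp; ring
      rw [c]; field_simp; ring
    rw [e1] at hR
    rw [e2, ← hR, inv_inv]
    ring

/-- Let `s ≥ 1`, let `m₁,...,m_{s+1}` and `n₁,...,n_s` be nonnegative integers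
(0-indexed here: `m 0,...,m s` and `n 0,...,n (s-1)`), and let
`λ = [(2)^{m₁}, n₁+3, (2)^{m₂}, n₂+3, ..., n_s+3, (2)^{m_{s+1}}]⁻`.
All entries are `≥ 2`, so it is well defined (all tails are positive) and `λ > 1`,
and `λ/(λ−1) = [m₁+2, (2)^{n₁}, m₂+3, (2)^{n₂}, m₃+3, ..., (2)^{n_s}, m_{s+1}+2]⁻`. -/
theorem stmt8 (s : ℕ) (hs : 1 ≤ s) (m n : ℕ → ℕ) :
    let L : List ℝ := ((List.range s).flatMap fun i =>
        List.replicate (m i) (2 : ℝ) ++ [(n i : ℝ) + 3]) ++ List.replicate (m s) (2 : ℝ)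
    let R : List ℝ := ((m 0 : ℝ) + 2) :: (List.range s).flatMap fun i =>
        List.replicate (n i) (2 : ℝ) ++ [(m (i + 1) : ℝ) + (if i + 1 = s then 2 else 3)]
    let lam := HJCF L
    (∀ k < L.length, 0 < HJCF (L.drop k)) ∧
    1 < lam ∧
    lam / (lam - 1) = HJCF R := by
  intro L R lam
  have hmem : ∀ x ∈ L, 2 ≤ x := two_le_of_mem_blocks s m n
  have hne : L ≠ [] := by
    obtain ⟨s, rfl⟩ : ∃ k, s = k + 1 := ⟨s - 1, by omega⟩
    have : L = blocks (s + 1) m n := rfl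
    rw [this, blocks_succ]
    simp
  have h1 : 1 < lam := one_lt_HJCF L hne hmem
  refine ⟨fun k hk => ?_, h1, ?_⟩
  · refine one_pos.trans (one_lt_HJCF _ ?_ fun x hx => hmem x (List.mem_of_mem_drop hx))
    simpa [List.drop_eq_nil_iff] using hk
  · have h := HJCF_dual s m n
    rw [if_neg (by omega)] at h
    have h' : (1 - lam⁻¹)⁻¹ = HJCF R := h
    rw [← h']
    have a : lam ≠ 0 := by linarith
    have c : 1 - lam⁻¹ = (lam - 1) / lam := by field_simp
    rw [c, inv_div]
end
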